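/- Let u be a smooth function on an open set U ⊆ ℝ² whose Hessian matrix is positive definite at every point, and suppose u satisfies Abreu's equation ∑_{j,k=1}^{2} ∂²u^{jk}/∂x_j∂x_k = 0 on U, where (u^{jk}) denotes the inverse matrix of the Hessian of u. Let r := (det Hess u)^{−1/2}. Then ∑_{i,j=1}^{2} ∂/∂x_i ( u^{ij} · (∂r/∂x_j) / r ) = 0 at every point of U. Equivalently, the 1-form (−u^{2j}(∂r/∂x_j)/r) dx₁ + (u^{1j}(∂r/∂x_j)/r) dx₂ (summation over j) is closed, so that the harmonic conjugate coordinate H is locally well defined. -/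

import Mathlib

open Matrix

/-- The two standard basis vectors of `ℝ × ℝ`. -/
noncomputable def e2 : Fin 2 → ℝ × ℝ := ![(1, 0), (0, 1)]

/-- The Hessian matrix of a function `u : ℝ × ℝ → ℝ` at a point. -/
noncomputable def Hess (u : ℝ × ℝ → ℝ) (y : ℝ × ℝ) : Matrix (Fin 2) (Fin 2) ℝ :=
  Matrix.of fun i j => fderiv ℝ (fun z => fderiv ℝ u z (e2 i)) y (e2 j)

/-!
The first-order identity behind the theorem holds in every dimension. For a matrix field `M` whose
derivative satisfies the Codazzi symmetry `∂ₖ Mᵢⱼ = ∂ⱼ Mᵢₖ`, the formula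
`∂ₖ M⁻¹ = -M⁻¹ (∂ₖ M) M⁻¹` contracts to `∑ₖ ∂ₖ (M⁻¹)ₖᵢ = -∑ⱼ tr (M⁻¹ ∂ⱼ M) (M⁻¹)ⱼᵢ`, and by
Jacobi's formula the trace is `∂ⱼ log det M`. For `M = Hess u` and `r = (det M) ^ p` this says
`∑ⱼ uⁱʲ (∂ⱼ r) / r = -p ∑ₖ ∂ₖ uᵏⁱ`, so one further divergence produces `-p` times Abreu's
expression.
-/

section MatrixCalculus

variable {𝕜 E l m n : Type*} [NontriviallyNormedField 𝕜] [NormedAddCommGroup E]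
  [NormedSpace 𝕜 E] {x : E}

/-- The directional derivative of a matrix-valued function along `v`. It is taken entry by entry,
so that no norm on matrices has to be chosen. -/
noncomputable def entrywiseFDeriv (M : E → Matrix m n 𝕜) (x v : E) : Matrix m n 𝕜 :=
  Matrix.of fun i j => fderiv 𝕜 (fun z => M z i j) x v

lemma entrywiseFDeriv_mul [Fintype m] {M : E → Matrix l m 𝕜} {N : E → Matrix m n 𝕜}
    (hM : ∀ i j, DifferentiableAt 𝕜 (fun z => M z i j) x)
    (hN : ∀ i j, DifferentiableAt 𝕜 (fun z => N z i j) x) (v : E) :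
    entrywiseFDeriv (fun z => M z * N z) x v =
      entrywiseFDeriv M x v * N x + M x * entrywiseFDeriv N x v := by
  ext i j
  simp only [entrywiseFDeriv, of_apply, Matrix.add_apply, mul_apply, ← Finset.sum_add_distrib]
  rw [fderiv_fun_sum fun k _ => (hM i k).fun_mul (hN k j), _root_.sum_apply]
  refine Finset.sum_congr rfl fun k _ => ?_
  rw [fderiv_fun_mul (hM i k) (hN k j)]
  simp only [_root_.add_apply, _root_.smul_apply, smul_eq_mul]
  ring

variable [Fintype n] [DecidableEq n] {M : E → Matrix n n 𝕜}

/-- The determinant as a continuous alternating map in the rows; this is how the calculus of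
continuous multilinear maps is applied to it. -/
def continuousDet (𝕜 n : Type*) [NontriviallyNormedField 𝕜] [Fintype n] [DecidableEq n] :
    (n → 𝕜) [⋀^n]→L[𝕜] 𝕜 :=
  { Matrix.detRowAlternating with cont := Continuous.matrix_det continuous_id }

lemma det_updateRow_eq_sum_adjugate (A : Matrix n n 𝕜) (i : n) (b : n → 𝕜) :
    (A.updateRow i b).det = ∑ j, b j * A.adjugate j i := by
  rw [← cramer_transpose_apply, cramer_eq_adjugate_mulVec, ← adjugate_transpose]
  simp only [mulVec, dotProduct, transpose_apply, mul_comm]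

lemma fderiv_det_apply (hM : ∀ i j, DifferentiableAt 𝕜 (fun z => M z i j) x) (v : E) :
    fderiv 𝕜 (fun z => (M z).det) x v = ((M x).adjugate * entrywiseFDeriv M x v).trace := by
  have hrows : HasFDerivAt (fun z i j => M z i j)
      (ContinuousLinearMap.pi fun i => .pi fun j => fderiv 𝕜 (fun z => M z i j) x) x :=
    hasFDerivAt_pi.2 fun i => hasFDerivAt_pi.2 fun j => (hM i j).hasFDerivAt
  have hdet := (((continuousDet 𝕜 n).hasFDerivAt (M x)).comp x hrows).fderiv
  calc fderiv 𝕜 (fun z => (M z).det) x v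
      = ∑ i, ((M x).updateRow i (entrywiseFDeriv M x v i)).det :=
        (congrArg (fun L => L v) hdet).trans
          ((continuousDet 𝕜 n).toContinuousMultilinearMap.linearDeriv_apply (M x) _)
    _ = ((M x).adjugate * entrywiseFDeriv M x v).trace := by
        rw [trace_mul_comm]
        simp only [det_updateRow_eq_sum_adjugate, trace, diag_apply, mul_apply]

lemma fderiv_det_apply_of_det_ne_zero (hM : ∀ i j, DifferentiableAt 𝕜 (fun z => M z i j) x)
    (hdet : (M x).det ≠ 0) (v : E) :
    fderiv 𝕜 (fun z => (M z).det) x v =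
      (M x).det * ((M x)⁻¹ * entrywiseFDeriv M x v).trace := by
  rw [fderiv_det_apply hM, inv_def, Ring.inverse_eq_inv', smul_mul, trace_smul, smul_eq_mul,
    mul_inv_cancel_left₀ hdet]

lemma contDiffAt_det {k : WithTop ℕ∞} (hM : ∀ i j, ContDiffAt 𝕜 k (fun z => M z i j) x) :
    ContDiffAt 𝕜 k (fun z => (M z).det) x := by
  simp only [det_apply']
  fun_prop

lemma contDiffAt_inv_apply {k : WithTop ℕ∞} (hM : ∀ i j, ContDiffAt 𝕜 k (fun z => M z i j) x)
    (hdet : (M x).det ≠ 0) (i j : n) : ContDiffAt 𝕜 k (fun z => (M z)⁻¹ i j) x := by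
  have hadj : ContDiffAt 𝕜 k (fun z => (M z).adjugate i j) x := by
    simp only [adjugate_apply]
    refine contDiffAt_det fun r s => ?_
    by_cases hr : r = j
    · simpa only [updateRow_apply, if_pos hr] using contDiffAt_const
    · simpa only [updateRow_apply, if_neg hr] using hM r s
  simp only [inv_def, Ring.inverse_eq_inv', Matrix.smul_apply, smul_eq_mul]
  exact ((contDiffAt_det hM).inv hdet).mul hadj

lemma differentiableAt_det (hM : ∀ i j, DifferentiableAt 𝕜 (fun z => M z i j) x) :
    DifferentiableAt 𝕜 (fun z => (M z).det) x := by
  simp only [det_apply']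
  fun_prop

lemma differentiableAt_inv_apply (hM : ∀ i j, DifferentiableAt 𝕜 (fun z => M z i j) x)
    (hdet : (M x).det ≠ 0) (i j : n) : DifferentiableAt 𝕜 (fun z => (M z)⁻¹ i j) x := by
  have hinv : ContDiffAt 𝕜 1 (fun A : n → n → 𝕜 => (Matrix.of A)⁻¹ i j) (M x) :=
    contDiffAt_inv_apply (E := n → n → 𝕜) (M := Matrix.of) (x := M x)
      (fun k l => (contDiff_apply_apply 𝕜 𝕜 k l).contDiffAt) hdet i j
  have hrows : DifferentiableAt 𝕜 (fun z i j => M z i j) x :=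
    differentiableAt_pi.2 fun k => differentiableAt_pi.2 fun l => hM k l
  exact (hinv.differentiableAt one_ne_zero).comp x hrows

lemma entrywiseFDeriv_inv (hM : ∀ i j, DifferentiableAt 𝕜 (fun z => M z i j) x)
    (hdet : (M x).det ≠ 0) (v : E) :
    entrywiseFDeriv (fun z => (M z)⁻¹) x v = -((M x)⁻¹ * entrywiseFDeriv M x v * (M x)⁻¹) := by
  have hinv := differentiableAt_inv_apply hM hdet
  have hone : ∀ᶠ z in nhds x, M z * (M z)⁻¹ = 1 := by
    filter_upwards [(differentiableAt_det hM).continuousAt.eventually_ne hdet] with z hz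
      using mul_nonsing_inv _ hz.isUnit
  have hconst : entrywiseFDeriv (fun z => M z * (M z)⁻¹) x v = 0 := by
    ext i j
    have hij : (fun z => (M z * (M z)⁻¹) i j) =ᶠ[nhds x] fun _ => (1 : Matrix n n 𝕜) i j :=
      hone.mono fun z hz => congrFun₂ hz i j
    simp only [entrywiseFDeriv, of_apply, hij.fderiv_eq, fderiv_fun_const, Pi.zero_apply,
      _root_.zero_apply, Matrix.zero_apply]
  have hcancel : M x * entrywiseFDeriv (fun z => (M z)⁻¹) x v =
      -(entrywiseFDeriv M x v * (M x)⁻¹) := by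
    rw [entrywiseFDeriv_mul hM hinv] at hconst
    exact eq_neg_of_add_eq_zero_right hconst
  rw [← nonsing_inv_mul_cancel_left (M x) (entrywiseFDeriv (fun z => (M z)⁻¹) x v) hdet.isUnit,
    hcancel, mul_neg, Matrix.mul_assoc]

lemma sum_fderiv_inv_apply_eq_neg_sum_trace {v : n → E}
    (hM : ∀ i j, DifferentiableAt 𝕜 (fun z => M z i j) x) (hdet : (M x).det ≠ 0)
    (hcodazzi : ∀ i j k, entrywiseFDeriv M x (v k) i j = entrywiseFDeriv M x (v j) i k) (i : n) :
    ∑ k, fderiv 𝕜 (fun z => (M z)⁻¹ k i) x (v k) =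
      -∑ j, ((M x)⁻¹ * entrywiseFDeriv M x (v j)).trace * (M x)⁻¹ j i := by
  calc ∑ k, fderiv 𝕜 (fun z => (M z)⁻¹ k i) x (v k)
      = ∑ k, entrywiseFDeriv (fun z => (M z)⁻¹) x (v k) k i := rfl
    _ = -∑ k, ∑ j, (∑ l, (M x)⁻¹ k l * entrywiseFDeriv M x (v k) l j) * (M x)⁻¹ j i := by
        simp only [entrywiseFDeriv_inv hM hdet, Matrix.neg_apply, mul_apply,
          Finset.sum_neg_distrib]
    _ = -∑ j, ∑ k, (∑ l, (M x)⁻¹ k l * entrywiseFDeriv M x (v j) l k) * (M x)⁻¹ j i := by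
        rw [Finset.sum_comm]
        refine congrArg Neg.neg (Finset.sum_congr rfl fun j _ => Finset.sum_congr rfl fun k _ => ?_)
        simp only [hcodazzi _ j k]
    _ = -∑ j, ((M x)⁻¹ * entrywiseFDeriv M x (v j)).trace * (M x)⁻¹ j i := by
        simp only [trace, diag_apply, mul_apply, Finset.sum_mul]

end MatrixCalculus

lemma fderiv_rpow_const_div_rpow_const {E : Type*} [NormedAddCommGroup E] [NormedSpace ℝ E]
    {f : E → ℝ} {x : E} (hf : DifferentiableAt ℝ f x) (hx : 0 < f x) (p : ℝ) (v : E) :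
    fderiv ℝ (fun z => f z ^ p) x v / f x ^ p = p * (fderiv ℝ f x v / f x) := by
  rw [(hf.hasFDerivAt.rpow_const (Or.inl hx.ne')).fderiv, Real.rpow_sub_one hx.ne']
  have hpow := (Real.rpow_pos_of_pos hx p).ne'
  simp only [_root_.smul_apply, smul_eq_mul]
  field_simp

lemma contDiffAt_fderiv_apply {𝕜 E F : Type*} [NontriviallyNormedField 𝕜]
    [NormedAddCommGroup E] [NormedSpace 𝕜 E] [NormedAddCommGroup F] [NormedSpace 𝕜 F]
    {f : E → F} {x : E} {m k : WithTop ℕ∞} (hf : ContDiffAt 𝕜 k f x) (hmk : m + 1 ≤ k) (v : E) :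
    ContDiffAt 𝕜 m (fun z => fderiv 𝕜 f z v) x :=
  (hf.fderiv_right hmk).clm_apply contDiffAt_const

lemma fderiv_fderiv_apply_comm {𝕜 E F : Type*} [RCLike 𝕜] [NormedAddCommGroup E]
    [NormedSpace 𝕜 E] [NormedAddCommGroup F] [NormedSpace 𝕜 F] {f : E → F} {x : E}
    (hf : ContDiffAt 𝕜 2 f x) (v w : E) :
    fderiv 𝕜 (fun z => fderiv 𝕜 f z v) x w = fderiv 𝕜 (fun z => fderiv 𝕜 f z w) x v := by
  have hf' : DifferentiableAt 𝕜 (fderiv 𝕜 f) x :=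
    (hf.fderiv_right (m := 1) (by norm_num)).differentiableAt one_ne_zero
  rw [fderiv_clm_apply hf' (differentiableAt_const v),
    fderiv_clm_apply hf' (differentiableAt_const w)]
  simpa using (hf.isSymmSndFDerivAt (by simp)).eq w v

section Hessian

variable {E n : Type*} [NormedAddCommGroup E] [NormedSpace ℝ E] {v : n → E} {u : E → ℝ} {x : E}

/-- The Hessian matrix `(∂ⱼ ∂ᵢ u)` of `u` with respect to a family of directions `v`. -/
noncomputable def hessianAlong (v : n → E) (u : E → ℝ) (y : E) : Matrix n n ℝ :=
  Matrix.of fun i j => fderiv ℝ (fun z => fderiv ℝ u z (v i)) y (v j)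

lemma hessianAlong_isSymm (hu : ContDiffAt ℝ 2 u x) : (hessianAlong v u x).IsSymm :=
  IsSymm.ext fun i j => fderiv_fderiv_apply_comm hu (v j) (v i)

lemma contDiffAt_hessianAlong_apply {m k : WithTop ℕ∞} (hu : ContDiffAt ℝ k u x)
    (hmk : m + 2 ≤ k) (i j : n) : ContDiffAt ℝ m (fun z => hessianAlong v u z i j) x :=
  contDiffAt_fderiv_apply
    (contDiffAt_fderiv_apply hu (by rwa [add_assoc, one_add_one_eq_two]) (v i)) le_rfl (v j)

lemma entrywiseFDeriv_hessianAlong_comm (hu : ContDiffAt ℝ 3 u x) (i j k : n) :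
    entrywiseFDeriv (hessianAlong v u) x (v k) i j =
      entrywiseFDeriv (hessianAlong v u) x (v j) i k :=
  fderiv_fderiv_apply_comm (contDiffAt_fderiv_apply hu (by norm_num) (v i)) (v j) (v k)

variable [Fintype n] [DecidableEq n]

lemma sum_inv_hessianAlong_mul_fderiv_rpow_det (hu : ContDiffAt ℝ 3 u x)
    (hdet : 0 < (hessianAlong v u x).det) (p : ℝ) (i : n) :
    ∑ j, (hessianAlong v u x)⁻¹ i j *
        fderiv ℝ (fun z => (hessianAlong v u z).det ^ p) x (v j) /
        (hessianAlong v u x).det ^ p =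
      -p * ∑ k, fderiv ℝ (fun z => (hessianAlong v u z)⁻¹ k i) x (v k) := by
  have hH : ∀ i j, ContDiffAt ℝ 1 (fun z => hessianAlong v u z i j) x :=
    contDiffAt_hessianAlong_apply hu (by norm_num)
  have hH' := fun i j => (hH i j).differentiableAt one_ne_zero
  have hlog : ∀ j, fderiv ℝ (fun z => (hessianAlong v u z).det ^ p) x (v j) /
      (hessianAlong v u x).det ^ p =
      p * ((hessianAlong v u x)⁻¹ * entrywiseFDeriv (hessianAlong v u) x (v j)).trace := by
    intro j
    rw [fderiv_rpow_const_div_rpow_const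
        ((contDiffAt_det hH).differentiableAt one_ne_zero) hdet,
      fderiv_det_apply_of_det_ne_zero hH' hdet.ne', mul_div_cancel_left₀ _ hdet.ne']
  have hsymm : ∀ j, (hessianAlong v u x)⁻¹ i j = (hessianAlong v u x)⁻¹ j i := fun j =>
    (hessianAlong_isSymm (hu.of_le (by norm_num))).inv.apply j i
  rw [sum_fderiv_inv_apply_eq_neg_sum_trace hH' hdet.ne' (entrywiseFDeriv_hessianAlong_comm hu),
    neg_mul_neg, Finset.mul_sum]
  refine Finset.sum_congr rfl fun j _ => ?_
  rw [mul_div_assoc, hlog, hsymm]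
  ring

theorem harmonic_conjugate_exists_general (hu : ContDiffAt ℝ 4 u x)
    (hdet : 0 < (hessianAlong v u x).det) (p : ℝ) :
    ∑ i, fderiv ℝ (fun y => ∑ j, (hessianAlong v u y)⁻¹ i j *
        fderiv ℝ (fun z => (hessianAlong v u z).det ^ p) y (v j) /
        (hessianAlong v u y).det ^ p) x (v i) =
      -p * ∑ j, ∑ k, fderiv ℝ
        (fun y => fderiv ℝ (fun z => (hessianAlong v u z)⁻¹ j k) y (v j)) x (v k) := by
  have hH : ∀ i j, ContDiffAt ℝ 2 (fun z => hessianAlong v u z i j) x :=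
    contDiffAt_hessianAlong_apply hu (by norm_num)
  have hdiv : ∀ k i, DifferentiableAt ℝ
      (fun y => fderiv ℝ (fun z => (hessianAlong v u z)⁻¹ k i) y (v k)) x := fun k i =>
    (contDiffAt_fderiv_apply (m := 1) (contDiffAt_inv_apply hH hdet.ne' k i) (by norm_num)
      (v k)).differentiableAt one_ne_zero
  have hfield : ∀ i, (fun y => ∑ j, (hessianAlong v u y)⁻¹ i j *
        fderiv ℝ (fun z => (hessianAlong v u z).det ^ p) y (v j) /
        (hessianAlong v u y).det ^ p) =ᶠ[nhds x] fun y =>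
      -p * ∑ k, fderiv ℝ (fun z => (hessianAlong v u z)⁻¹ k i) y (v k) := by
    intro i
    filter_upwards [hu.eventually (by decide),
      continuousAt_const.eventually_lt (contDiffAt_det hH).continuousAt hdet] with y huy hdety
    exact sum_inv_hessianAlong_mul_fderiv_rpow_det (huy.of_le (by norm_num)) hdety p i
  rw [Finset.sum_comm, Finset.mul_sum]
  refine Finset.sum_congr rfl fun i _ => ?_
  rw [(hfield i).fderiv_eq, fderiv_const_mul (.fun_sum fun k _ => hdiv k i),
    fderiv_fun_sum fun k _ => hdiv k i]
  simp only [_root_.smul_apply, _root_.sum_apply, smul_eq_mul]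

end Hessian

/-- The reverse direction of Donaldson's construction: if `u` is smooth on an open set
`U ⊆ ℝ²` with positive definite Hessian, satisfying Abreu's equation
`∑_{j,k} ∂²u^{jk}/∂x_j∂x_k = 0` (where `(u^{jk})` is the inverse of the Hessian), and
`r := (det Hess u)^{−1/2}`, then `∑_{i,j} ∂/∂x_i (u^{ij}·(∂r/∂x_j)/r) = 0` on `U`;
i.e. the 1-form defining the harmonic conjugate coordinate `H` is closed. -/
theorem harmonic_conjugate_exists
    (U : Set (ℝ × ℝ)) (hUopen : IsOpen U)
    (u : ℝ × ℝ → ℝ) (hu : ContDiffOn ℝ (⊤ : ℕ∞) u U)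
    (hpos : ∀ x ∈ U, (Hess u x).PosDef)
    (habreu : ∀ x ∈ U, ∑ j : Fin 2, ∑ k : Fin 2,
        fderiv ℝ (fun y => fderiv ℝ (fun z => ((Hess u z)⁻¹) j k) y (e2 j)) x (e2 k)
          = 0) :
    ∀ x ∈ U, ∑ i : Fin 2,
        fderiv ℝ
          (fun y => ∑ j : Fin 2,
            ((Hess u y)⁻¹ i j) *
              (fderiv ℝ (fun z => ((Hess u z).det) ^ (-(1 : ℝ) / 2)) y (e2 j)) /
              (((Hess u y).det) ^ (-(1 : ℝ) / 2)))
          x (e2 i) = 0 := by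
  intro x hx
  exact (harmonic_conjugate_exists_general (v := e2)
    ((contDiffOn_infty.1 hu 4).contDiffAt (hUopen.mem_nhds hx)) (hpos x hx).det_pos _).trans
    (mul_eq_zero_of_right _ (habreu x hx))
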